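/- arXiv:quant-ph/0511149 — 2 statements merged into one kernel-verified Lean document; each statement's English description precedes it below -/
import Mathlib

section
/- Let G be a finite group, let (σ_j)_{j∈J} be a complete family of irreducibles for G, let k ≥ 1, let ρ be a unitary representation of G^k on a finite-dimensional complex inner product space V, and let M ⊆ G be a conjugacy class of involutions with representative m₀. Then for every unit vector b ∈ V, Var_{m∈M} ‖Π_m b‖² ≤ 4^{-k} Σ_{∅ ≠ I₁ ⊆ {1,…,k}} Σ_{∅ ≠ I₂ ⊆ {1,…,k}} E^{I₁,I₂}(b), where Π_m = 2^{-k} Σ_{I ⊆ {1,…,k}} ρ(m^I). -/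
noncomputable section

open scoped BigOperators InnerProductSpace

def IsUnitaryRep {G V : Type*} [Group G] [NormedAddCommGroup V] [InnerProductSpace ℂ V]
    (ρ : Representation ℂ G V) : Prop :=
  ∀ (g : G) (v w : V), ⟪ρ g v, ρ g w⟫_ℂ = ⟪v, w⟫_ℂ

def IsIrreducibleRep {G V : Type*} [Group G] [AddCommGroup V] [Module ℂ V]
    (ρ : Representation ℂ G V) : Prop :=
  (∃ v : V, v ≠ 0) ∧
    ∀ W : Submodule ℂ V, (∀ (g : G) (v : V), v ∈ W → ρ g v ∈ W) → W = ⊥ ∨ W = ⊤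

def RepIso {G V₁ V₂ : Type*} [Group G] [AddCommGroup V₁] [Module ℂ V₁]
    [AddCommGroup V₂] [Module ℂ V₂]
    (ρ₁ : Representation ℂ G V₁) (ρ₂ : Representation ℂ G V₂) : Prop :=
  ∃ e : V₁ ≃ₗ[ℂ] V₂, ∀ (g : G) (v : V₁), e (ρ₁ g v) = ρ₂ g (e v)

def repChar {G V : Type*} [Group G] [AddCommGroup V] [Module ℂ V]
    (ρ : Representation ℂ G V) (g : G) : ℂ := LinearMap.trace ℂ V (ρ g)

def IsCompleteFamily {G : Type*} [Group G] {J : Type*}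
    (W : J → Type*) [∀ j, NormedAddCommGroup (W j)] [∀ j, InnerProductSpace ℂ (W j)]
    [∀ j, FiniteDimensional ℂ (W j)]
    (σ : ∀ j, Representation ℂ G (W j)) : Prop :=
  (∀ j, IsUnitaryRep (σ j)) ∧ (∀ j, IsIrreducibleRep (σ j)) ∧
    (∀ j j', j ≠ j' → ¬ RepIso (σ j) (σ j')) ∧
    (∀ (U : Type) [AddCommGroup U] [Module ℂ U] [FiniteDimensional ℂ U]
      (τ : Representation ℂ G U), IsIrreducibleRep τ → ∃ j, RepIso τ (σ j))

def isoProj {G V : Type*} [Group G] [Fintype G] [AddCommGroup V] [Module ℂ V]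
    (d : ℕ) (χ : G → ℂ) (ρ : Representation ℂ G V) : V →ₗ[ℂ] V :=
  ((d : ℂ) / (Fintype.card G : ℂ)) • ∑ g : G, starRingEnd ℂ (χ g) • (ρ g : V →ₗ[ℂ] V)

def onI {G : Type*} [One G] {k : ℕ} (g : G) (I : Finset (Fin k)) : Fin k → G :=
  fun i => if i ∈ I then g else 1

def invProj {G V : Type*} [Group G] [AddCommGroup V] [Module ℂ V] {k : ℕ}
    (ρ : Representation ℂ (Fin k → G) V) (m : G) : V →ₗ[ℂ] V :=
  ((2 : ℂ) ^ k)⁻¹ • ∑ I : Finset (Fin k), (ρ (onI m I) : V →ₗ[ℂ] V)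

def isoProjI {G V : Type*} [Group G] [Fintype G] [AddCommGroup V] [Module ℂ V] {k : ℕ}
    (ρ : Representation ℂ (Fin k → G) V) (d : ℕ) (χ : G → ℂ) (I : Finset (Fin k)) :
    V →ₗ[ℂ] V :=
  ((d : ℂ) / (Fintype.card G : ℂ)) • ∑ g : G, starRingEnd ℂ (χ g) • (ρ (onI g I) : V →ₗ[ℂ] V)

lemma aux_isIrr {G V : Type*} [Group G] [AddCommGroup V] [Module ℂ V]
    (ρ : Representation ℂ G V) (h : IsIrreducibleRep ρ) : ρ.IsIrreducible := by
  obtain ⟨⟨v, hv⟩, h2⟩ := h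
  refine { exists_pair_ne := ⟨⊥, ⊤, ?_⟩, eq_bot_or_eq_top := ?_ }
  · intro e
    have e2 := congrArg Subrepresentation.toSubmodule e
    have : v ∈ (⊥ : Subrepresentation ρ).toSubmodule := by
      rw [e2]; exact Submodule.mem_top
    exact hv ((Submodule.mem_bot ℂ).1 this)
  · intro a
    rcases h2 a.toSubmodule (fun g v hv => a.apply_mem_toSubmodule g hv) with h | h
    · left; exact Subrepresentation.toSubmodule_injective h
    · right; exact Subrepresentation.toSubmodule_injective h

lemma aux_conj {G V : Type*} [Group G] [NormedAddCommGroup V] [InnerProductSpace ℂ V]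
    [FiniteDimensional ℂ V]
    (ρ : Representation ℂ G V) (h : IsUnitaryRep ρ) (g : G) :
    starRingEnd ℂ (repChar ρ g) = repChar ρ g⁻¹ := by
  unfold repChar
  rw [LinearMap.trace_eq_sum_inner _ (stdOrthonormalBasis ℂ V),
    LinearMap.trace_eq_sum_inner _ (stdOrthonormalBasis ℂ V), map_sum]
  refine Finset.sum_congr rfl fun i _ => ?_
  rw [inner_conj_symm, ← h g _ (ρ g⁻¹ _), ← Module.End.mul_apply, ← map_mul]
  simp

/-- Schur: a class function whose character pairing vanishes acts by zero. -/
lemma aux_schur {G V : Type*} [Group G] [Fintype G] [AddCommGroup V] [Module ℂ V]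
    [FiniteDimensional ℂ V]
    (ρ : Representation ℂ G V) (h : IsIrreducibleRep ρ) (f : G → ℂ)
    (hf : ∀ g x, f (x * g * x⁻¹) = f g) (h0 : ∑ g, f g * repChar ρ g = 0) :
    ∑ g, f g • ρ g = 0 := by
  set T : Module.End ℂ V := ∑ g, f g • ρ g with hT
  have hcomm : ∀ x v, T (ρ x v) = ρ x (T v) := by
    intro x v
    have : T * ρ x = ρ x * T := by
      rw [hT, Finset.sum_mul, Finset.mul_sum]
      refine Fintype.sum_equiv (MulAut.conj x⁻¹).toEquiv _ _ fun g => ?_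
      have := hf g x⁻¹
      simp only [inv_inv] at this
      simp only [smul_mul_assoc, mul_smul_comm, ← map_mul]
      rw [mul_assoc] at this
      simp [this, mul_assoc]
    exact LinearMap.congr_fun this v
  obtain ⟨⟨v, hv⟩, h2⟩ := h
  have : Nontrivial V := ⟨v, 0, hv⟩
  obtain ⟨c, hc⟩ := Module.End.exists_eigenvalue T
  have htop : Module.End.eigenspace T c = ⊤ := by
    rcases h2 (Module.End.eigenspace T c) (fun g v hv => by
      rw [Module.End.mem_eigenspace_iff] at hv ⊢
      rw [hcomm, hv, map_smul]) with h | h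
    · exact absurd h hc
    · exact h
  have hTc : T = c • 1 := by
    ext v
    have : v ∈ Module.End.eigenspace T c := by rw [htop]; trivial
    simpa [Module.End.mem_eigenspace_iff] using this
  have htr : LinearMap.trace ℂ V T = 0 := by
    rw [← h0, hT, map_sum]
    simp [repChar]
  rw [hTc, map_smul, LinearMap.trace_one, smul_eq_mul, mul_eq_zero] at htr
  rcases htr with h | h
  · rw [hTc, h, zero_smul]
  · exact absurd h (by exact_mod_cast (Module.finrank_pos (R := ℂ) (M := V)).ne')

open MonoidAlgebra in
lemma aux_class_zero {G : Type*} [Group G] [Fintype G] {J : Type*}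
    (W : J → Type*) [∀ j, NormedAddCommGroup (W j)] [∀ j, InnerProductSpace ℂ (W j)]
    [∀ j, FiniteDimensional ℂ (W j)]
    (σ : ∀ j, Representation ℂ G (W j)) (hfam : IsCompleteFamily W σ) (f : G → ℂ)
    (hf : ∀ g x, f (x * g * x⁻¹) = f g) (h0 : ∀ j, ∑ g, f g * repChar (σ j) g = 0) (g : G) :
    f g = 0 := by
  obtain ⟨-, hirr, -, hcomp⟩ := hfam
  let a : MonoidAlgebra ℂ G := ∑ g, single g (f g)
  have key : ∀ m : Submodule (MonoidAlgebra ℂ G) (MonoidAlgebra ℂ G),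
      IsSimpleModule (MonoidAlgebra ℂ G) m → ∀ x ∈ m, a * x = 0 := by
    intro m hm x hx
    have : FiniteDimensional ℂ m :=
      inferInstanceAs (FiniteDimensional ℂ (m.restrictScalars ℂ))
    let e : m ≃ₗ[ℂ] (Fin (Module.finrank ℂ m) → ℂ) :=
      LinearEquiv.ofFinrankEq _ _ (by simp)
    let τ : Representation ℂ G (Fin (Module.finrank ℂ m) → ℂ) :=
      { toFun := fun g => e.toLinearMap ∘ₗ (Algebra.lsmul ℂ ℂ m (of ℂ G g)) ∘ₗ e.symm.toLinearMap
        map_one' := by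
          refine LinearMap.ext fun v => ?_
          rw [map_one, map_one]; simp
        map_mul' := by
          intro x y
          refine LinearMap.ext fun v => ?_
          rw [map_mul, map_mul]; simp }
    have hτ : ∀ g y, e (of ℂ G g • y) = τ g (e y) := by
      intro g y; simp [τ]
    have hτi : IsIrreducibleRep τ := by
      constructor
      · have := IsSimpleModule.nontrivial (MonoidAlgebra ℂ G) m
        obtain ⟨y, hy⟩ := exists_ne (0 : m)
        exact ⟨e y, by simpa using hy⟩
      · intro U hU
        let N : Submodule (MonoidAlgebra ℂ G) m :=
          { carrier := {y | e y ∈ U}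
            add_mem' := by intro x y hx hy; simpa using U.add_mem hx hy
            zero_mem' := by simp
            smul_mem' := by
              intro r y hy
              induction r using MonoidAlgebra.induction_on with
              | of g => 
                show e _ ∈ U
                rw [hτ]; exact hU _ _ hy
              | add r s hr hs =>
                show e _ ∈ U
                rw [add_smul, map_add]; exact U.add_mem hr hs
              | smul c r hr =>
                show e _ ∈ U
                rw [smul_assoc, map_smul]; exact U.smul_mem _ hr }
        have hN : ∀ u, u ∈ U ↔ e.symm u ∈ N := by
          intro u
          show _ ↔ e _ ∈ U
          simp
        rcases eq_bot_or_eq_top N with h | h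
        · left
          ext u
          rw [hN, h]; simp
        · right
          ext u
          rw [hN, h]; simp
    obtain ⟨j, E, hE⟩ := hcomp _ τ hτi
    have hz := aux_schur (σ j) (hirr j) f hf (h0 j)
    have h1 : a • (⟨x, hx⟩ : m) = 0 := by
      apply e.injective
      apply E.injective
      rw [map_zero, map_zero]
      have : a = ∑ g, f g • of ℂ G g := by simp [a]
      rw [this, Finset.sum_smul, map_sum, map_sum]
      have h3 := LinearMap.congr_fun hz (E (e ⟨x, hx⟩))
      rw [LinearMap.sum_apply] at h3
      refine Eq.trans (Finset.sum_congr rfl fun g _ => ?_) h3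
      rw [smul_assoc, map_smul, map_smul, hτ, hE]; rfl
    simpa using congrArg Subtype.val h1
  have hNe : NeZero (Nat.card G : ℂ) := ⟨by simp⟩
  have h1 : (1 : MonoidAlgebra ℂ G) ∈ sSup {m : Submodule (MonoidAlgebra ℂ G) (MonoidAlgebra ℂ G) |
      IsSimpleModule (MonoidAlgebra ℂ G) m} := by
    rw [IsSemisimpleModule.sSup_simples_eq_top]; trivial
  rw [sSup_eq_iSup'] at h1
  have h2 : a * 1 = 0 := by
    refine Submodule.iSup_induction _ (motive := fun x => a * x = 0) h1 ?_ (by simp) ?_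
    · rintro ⟨m, hm⟩ x hx
      exact key m hm x hx
    · intro x y hx hy; rw [mul_add, hx, hy, add_zero]
  rw [mul_one] at h2
  classical
  have h3 := congrArg (fun z : MonoidAlgebra ℂ G => z.coeff g) h2
  simpa [a, Finsupp.single_apply] using h3

lemma aux_char_class {G V : Type*} [Group G] [AddCommGroup V] [Module ℂ V]
    (ρ : Representation ℂ G V) (g x : G) : repChar ρ (x * g * x⁻¹) = repChar ρ g :=
  ρ.char_conj g x

lemma aux_orth {G : Type*} [Group G] [Fintype G] {J : Type*} [DecidableEq J]
    (W : J → Type*) [∀ j, NormedAddCommGroup (W j)] [∀ j, InnerProductSpace ℂ (W j)]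
    [∀ j, FiniteDimensional ℂ (W j)]
    (σ : ∀ j, Representation ℂ G (W j)) (hfam : IsCompleteFamily W σ) (i j : J) :
    ∑ g, starRingEnd ℂ (repChar (σ j) g) * repChar (σ i) g
      = if i = j then (Fintype.card G : ℂ) else 0 := by
  obtain ⟨hu, hirr, hne, -⟩ := hfam
  have := aux_isIrr _ (hirr i)
  have := aux_isIrr _ (hirr j)
  have hc : (Nat.card G : ℂ) ≠ 0 := by simp
  let _ : Invertible (Nat.card G : ℂ) := invertibleOfNonzero hc
  have h := Representation.char_orthonormal (σ i) (σ j)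
  have h2 : ∑ g, starRingEnd ℂ (repChar (σ j) g) * repChar (σ i) g
      = ∑ g, (σ i).character g * (σ j).character g⁻¹ := by
    refine Finset.sum_congr rfl fun g _ => ?_
    rw [aux_conj _ (hu j), mul_comm]; rfl
  rw [h2]
  rw [inv_mul_eq_iff_eq_mul₀ hc] at h
  rw [h]
  by_cases hij : i = j
  · subst hij
    rw [if_pos rfl, if_pos ⟨Representation.Equiv.refl _⟩]
    simp
  · rw [if_neg hij, if_neg, mul_zero]
    rintro ⟨φ⟩
    refine hne j i (Ne.symm hij) ⟨φ.toLinearEquiv, fun g v => ?_⟩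
    exact LinearMap.congr_fun (φ.toIntertwiningMap.isIntertwining' g) v

open Classical in
lemma aux_col {G : Type*} [Group G] [Fintype G] {J : Type*} [Fintype J]
    (W : J → Type*) [∀ j, NormedAddCommGroup (W j)] [∀ j, InnerProductSpace ℂ (W j)]
    [∀ j, FiniteDimensional ℂ (W j)]
    (σ : ∀ j, Representation ℂ G (W j)) (hfam : IsCompleteFamily W σ)
    (M : Finset G) (m₀ : G) (hm₀M : m₀ ∈ M) (hM : ∀ m : G, m ∈ M ↔ IsConj m₀ m) (g : G) :
    ∑ j, repChar (σ j) m₀ * starRingEnd ℂ (repChar (σ j) g)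
      = if g ∈ M then (Fintype.card G : ℂ) / M.card else 0 := by
  have hMc : (M.card : ℂ) ≠ 0 := by
    exact_mod_cast (Finset.card_pos.2 ⟨m₀, hm₀M⟩).ne'
  symm
  rw [← sub_eq_zero]
  refine aux_class_zero W σ hfam (fun g => (if g ∈ M then (Fintype.card G : ℂ) / M.card else 0)
    - ∑ j, repChar (σ j) m₀ * starRingEnd ℂ (repChar (σ j) g)) ?_ ?_ g
  · intro g x
    have : x * g * x⁻¹ ∈ M ↔ g ∈ M := by
      rw [hM, hM]
      have hc : IsConj g (x * g * x⁻¹) := isConj_iff.2 ⟨x, rfl⟩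
      exact ⟨fun h => h.trans hc.symm, fun h => h.trans hc⟩
    simp only [this, aux_char_class]
  · intro i
    have h1 : ∑ g, (if g ∈ M then (Fintype.card G : ℂ) / M.card else 0) * repChar (σ i) g
        = Fintype.card G * repChar (σ i) m₀ := by
      simp only [ite_mul, zero_mul, Finset.sum_ite_mem, Finset.univ_inter]
      rw [Finset.sum_congr rfl (g := fun _ => (Fintype.card G : ℂ) / M.card * repChar (σ i) m₀)]
      · rw [Finset.sum_const, nsmul_eq_mul]; field_simp
      · intro m hm
        obtain ⟨x, hx⟩ := isConj_iff.1 ((hM m).1 hm)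
        rw [← hx, aux_char_class]
    have h2 : ∑ g, (∑ j, repChar (σ j) m₀ * starRingEnd ℂ (repChar (σ j) g)) * repChar (σ i) g
        = Fintype.card G * repChar (σ i) m₀ := by
      simp only [Finset.sum_mul]
      rw [Finset.sum_comm]
      simp only [mul_assoc, ← Finset.mul_sum, aux_orth W σ hfam]
      simp [mul_comm]
    simp only [sub_mul, Finset.sum_sub_distrib]
    rw [h1, h2, sub_self]

lemma aux_E {G : Type*} [Group G] [Fintype G] {J : Type*} [Fintype J]
    (W : J → Type*) [∀ j, NormedAddCommGroup (W j)] [∀ j, InnerProductSpace ℂ (W j)]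
    [∀ j, FiniteDimensional ℂ (W j)]
    (σ : ∀ j, Representation ℂ G (W j)) (hfam : IsCompleteFamily W σ)
    (M : Finset G) (m₀ : G) (hm₀M : m₀ ∈ M) (hM : ∀ m : G, m ∈ M ↔ IsConj m₀ m) (φ : G → ℂ) :
    ∑ j, repChar (σ j) m₀ / (Module.finrank ℂ (W j) : ℂ) *
            ((Module.finrank ℂ (W j) : ℂ) / (Fintype.card G : ℂ) *
              ∑ g : G, starRingEnd ℂ (repChar (σ j) g) * φ g)
      = (M.card : ℂ)⁻¹ * ∑ m ∈ M, φ m := by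
  classical
  have hG : (Fintype.card G : ℂ) ≠ 0 := by simp
  have h1 : ∀ j, repChar (σ j) m₀ / (Module.finrank ℂ (W j) : ℂ) *
            ((Module.finrank ℂ (W j) : ℂ) / (Fintype.card G : ℂ) *
              ∑ g : G, starRingEnd ℂ (repChar (σ j) g) * φ g)
      = (Fintype.card G : ℂ)⁻¹ * ∑ g, repChar (σ j) m₀ * starRingEnd ℂ (repChar (σ j) g) * φ g := by
    intro j
    obtain ⟨v, hv⟩ := (hfam.2.1 j).1
    have : Nontrivial (W j) := ⟨v, 0, hv⟩
    have hd : (Module.finrank ℂ (W j) : ℂ) ≠ 0 := by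
      exact_mod_cast (Module.finrank_pos (R := ℂ) (M := W j)).ne'
    simp only [mul_assoc, ← Finset.mul_sum]
    field_simp
  rw [Finset.sum_congr rfl fun j _ => h1 j, ← Finset.mul_sum, Finset.sum_comm]
  simp only [← Finset.sum_mul, aux_col W σ hfam M m₀ hm₀M hM]
  simp only [ite_mul, zero_mul, Finset.sum_ite_mem, Finset.univ_inter, ← Finset.mul_sum]
  field_simp

open scoped symmDiff in
lemma aux_onI {G : Type*} [Group G] {k : ℕ} (m : G) (hm : m * m = 1) (I I' : Finset (Fin k)) :
    onI m I * onI m I' = onI m (I ∆ I') := by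
  ext i
  simp only [onI, Pi.mul_apply, Finset.mem_symmDiff]
  by_cases h : i ∈ I <;> by_cases h' : i ∈ I' <;> simp [h, h', hm]

open scoped symmDiff in
lemma aux_norm {G V : Type*} [Group G] [NormedAddCommGroup V] [InnerProductSpace ℂ V] {k : ℕ}
    (ρ : Representation ℂ (Fin k → G) V) (hρu : IsUnitaryRep ρ) (m : G) (hm : m * m = 1) (b : V) :
    ((‖invProj ρ m b‖ ^ 2 : ℝ) : ℂ) = ((2 : ℂ) ^ k)⁻¹ * ∑ I : Finset (Fin k), ⟪b, ρ (onI m I) b⟫_ℂ := by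
  have h1 : ∀ I I' : Finset (Fin k),
      ⟪ρ (onI m I) b, ρ (onI m I') b⟫_ℂ = ⟪b, ρ (onI m (I ∆ I')) b⟫_ℂ := by
    intro I I'
    rw [← hρu (onI m I), ← Module.End.mul_apply, ← Module.End.mul_apply, ← map_mul, ← map_mul,
      aux_onI m hm, aux_onI m hm, symmDiff_self]
    have : onI m (⊥ : Finset (Fin k)) = 1 := by ext i; simp [onI]
    rw [this]; simp
  have h2 : ((‖invProj ρ m b‖ ^ 2 : ℝ) : ℂ) = ⟪invProj ρ m b, invProj ρ m b⟫_ℂ := by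
    rw [inner_self_eq_norm_sq_to_K]; push_cast; rfl
  have h3 : ∀ I : Finset (Fin k), ∑ I', ⟪b, ρ (onI m (I' ∆ I)) b⟫_ℂ
      = ∑ I', ⟪b, ρ (onI m I') b⟫_ℂ := fun I =>
    Fintype.sum_equiv (symmDiff_left_involutive I).toPerm _ _ fun I' => rfl
  rw [h2]
  simp only [invProj, LinearMap.smul_apply, LinearMap.sum_apply, inner_smul_left, inner_smul_right,
    sum_inner, inner_sum, h1]
  simp only [h3]
  simp
  left
  rw [Complex.conj_ofNat]

open scoped ComplexOrder

/-- Multiregister variance bound: for a unit vector `b`,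
`Var_{m∈M} ‖Π_m b‖² ≤ 4^{-k} Σ_{∅≠I₁,I₂⊆[k]} E^{I₁,I₂}(b)`. -/
theorem stmt8 {G : Type*} [Group G] [Fintype G]
    {J : Type*} [Fintype J]
    (W : J → Type*) [∀ j, NormedAddCommGroup (W j)] [∀ j, InnerProductSpace ℂ (W j)]
    [∀ j, FiniteDimensional ℂ (W j)]
    (σ : ∀ j, Representation ℂ G (W j)) (hfam : IsCompleteFamily W σ)
    {k : ℕ} (hk : 1 ≤ k)
    {V : Type*} [NormedAddCommGroup V] [InnerProductSpace ℂ V] [FiniteDimensional ℂ V]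
    (ρ : Representation ℂ (Fin k → G) V) (hρu : IsUnitaryRep ρ)
    (M : Finset G) (m₀ : G) (hm₀M : m₀ ∈ M)
    (hM : ∀ m : G, m ∈ M ↔ IsConj m₀ m)
    (hinv : ∀ m ∈ M, m * m = 1 ∧ m ≠ 1)
    (b : V) (hb : ‖b‖ = 1) :
    (((1 / (M.card : ℝ)) * ∑ m ∈ M, (‖invProj ρ m b‖ ^ 2) ^ 2
        - ((1 / (M.card : ℝ)) * ∑ m ∈ M, ‖invProj ρ m b‖ ^ 2) ^ 2 : ℝ) : ℂ)
      ≤ ((4 : ℂ) ^ k)⁻¹ *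
          ∑ I₁ ∈ Finset.univ.filter (fun I : Finset (Fin k) => I ≠ ∅),
          ∑ I₂ ∈ Finset.univ.filter (fun I : Finset (Fin k) => I ≠ ∅),
          ∑ j, repChar (σ j) m₀ / (Module.finrank ℂ (W j) : ℂ) *
            ((Module.finrank ℂ (W j) : ℂ) / (Fintype.card G : ℂ) *
              ∑ g : G, starRingEnd ℂ (repChar (σ j) g) *
                (⟪b, ρ (onI g I₁) b⟫_ℂ * starRingEnd ℂ ⟪b, ρ (onI g I₂) b⟫_ℂ)) := by
  have hMr : (M.card : ℝ) ≠ 0 := by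
    exact_mod_cast (Finset.card_pos.2 ⟨m₀, hm₀M⟩).ne'
  set X : G → ℝ := fun m => ‖invProj ρ m b‖ ^ 2 with hX
  set S : G → ℂ := fun m => ∑ I ∈ Finset.univ.filter (fun I : Finset (Fin k) => I ≠ ∅),
    ⟪b, ρ (onI m I) b⟫_ℂ with hS
  have hXS : ∀ m ∈ M, S m = (((2 : ℝ) ^ k * (X m - ((2 : ℝ) ^ k)⁻¹) : ℝ) : ℂ) := by
    intro m hm
    have h1 := aux_norm ρ hρu m (hinv m hm).1 b
    have h2 : ∑ I : Finset (Fin k), ⟪b, ρ (onI m I) b⟫_ℂ = 1 + S m := by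
      rw [← Finset.add_sum_erase _ _ (Finset.mem_univ (∅ : Finset (Fin k)))]
      congr 1
      · have : onI m (∅ : Finset (Fin k)) = 1 := by ext i; simp [onI]
        rw [this, map_one, Module.End.one_apply, inner_self_eq_norm_sq_to_K, hb]; simp
      · rw [hS]
        refine Finset.sum_congr ?_ fun _ _ => rfl
        ext I; simp
    rw [h2] at h1
    change ((X m : ℝ) : ℂ) = _ at h1
    push_cast
    rw [h1]
    field_simp
    ring
  have hR : ((4 : ℂ) ^ k)⁻¹ *
          ∑ I₁ ∈ Finset.univ.filter (fun I : Finset (Fin k) => I ≠ ∅),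
          ∑ I₂ ∈ Finset.univ.filter (fun I : Finset (Fin k) => I ≠ ∅),
          ∑ j, repChar (σ j) m₀ / (Module.finrank ℂ (W j) : ℂ) *
            ((Module.finrank ℂ (W j) : ℂ) / (Fintype.card G : ℂ) *
              ∑ g : G, starRingEnd ℂ (repChar (σ j) g) *
                (⟪b, ρ (onI g I₁) b⟫_ℂ * starRingEnd ℂ ⟪b, ρ (onI g I₂) b⟫_ℂ))
      = (((1 / (M.card : ℝ)) * ∑ m ∈ M, (X m - ((2 : ℝ) ^ k)⁻¹) ^ 2 : ℝ) : ℂ) := by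
    have h1 : ∀ I₁ I₂ : Finset (Fin k), _ := fun I₁ I₂ => aux_E W σ hfam M m₀ hm₀M hM
      (fun g => ⟪b, ρ (onI g I₁) b⟫_ℂ * starRingEnd ℂ ⟪b, ρ (onI g I₂) b⟫_ℂ)
    simp only [h1, ← Finset.mul_sum]
    have h2 : ∑ I₁ ∈ Finset.univ.filter (fun I : Finset (Fin k) => I ≠ ∅),
          ∑ I₂ ∈ Finset.univ.filter (fun I : Finset (Fin k) => I ≠ ∅), ∑ m ∈ M,
          ⟪b, ρ (onI m I₁) b⟫_ℂ * starRingEnd ℂ ⟪b, ρ (onI m I₂) b⟫_ℂ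
        = ∑ m ∈ M, S m * starRingEnd ℂ (S m) := by
      simp only [hS, map_sum, Finset.sum_mul_sum]
      rw [Finset.sum_comm (s := M)]
      refine Finset.sum_congr rfl fun I₁ _ => ?_
      rw [Finset.sum_comm (s := M)]
    rw [h2]
    have h3 : ∑ m ∈ M, S m * starRingEnd ℂ (S m)
        = (4 : ℂ) ^ k * ((∑ m ∈ M, (X m - ((2 : ℝ) ^ k)⁻¹) ^ 2 : ℝ) : ℂ) := by
      rw [Complex.ofReal_sum, Finset.mul_sum]
      refine Finset.sum_congr rfl fun m hm => ?_
      rw [hXS m hm, Complex.conj_ofReal]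
      have : (4 : ℂ) ^ k = 2 ^ k * 2 ^ k := by rw [← mul_pow]; norm_num
      rw [this]
      push_cast
      ring
    have : (4 : ℂ) ^ k ≠ 0 := by positivity
    rw [h3, Complex.ofReal_mul, mul_left_comm, inv_mul_cancel_left₀ this]
    push_cast
    rw [one_div]
  rw [hR, Complex.real_le_real]
  set c := ((2 : ℝ) ^ k)⁻¹
  have h4 : (1 / (M.card : ℝ)) * ∑ m ∈ M, (X m - c) ^ 2
      = (1 / (M.card : ℝ)) * ∑ m ∈ M, (X m) ^ 2
        - 2 * c * ((1 / (M.card : ℝ)) * ∑ m ∈ M, X m) + c ^ 2 := by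
    have : ∑ m ∈ M, (X m - c) ^ 2
        = ∑ m ∈ M, (X m) ^ 2 - 2 * c * ∑ m ∈ M, X m + M.card * c ^ 2 := by
      rw [Finset.mul_sum, ← nsmul_eq_mul, ← Finset.sum_const, ← Finset.sum_sub_distrib,
        ← Finset.sum_add_distrib]
      exact Finset.sum_congr rfl fun m _ => by ring
    rw [this]
    field_simp
  rw [h4]
  nlinarith [sq_nonneg ((1 / (M.card : ℝ)) * ∑ m ∈ M, X m - c)]
end
end

section
/- Let G be a finite group, let (σ_j)_{j∈J} be a complete family of irreducibles for G, let ρ be any unitary representation of G on a finite-dimensional complex inner product space V, and let b ∈ V. Then (1/|G|) Σ_{g∈G} |⟨b, ρ(g) b⟩|² ≤ Σ_{j∈J} ‖I_j b‖⁴ / d_j, where I_j = (d_j/|G|) Σ_{g∈G} conj(χ_j(g)) ρ(g) is the σ_j-isotypic projection. -/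
noncomputable section

open scoped BigOperators InnerProductSpace

section Aux

theorem aux_adj {G V : Type*} [Group G] [NormedAddCommGroup V] [InnerProductSpace ℂ V]
    {ρ : Representation ℂ G V} (h : IsUnitaryRep ρ) (g : G) (v w : V) :
    ⟪ρ g v, w⟫_ℂ = ⟪v, ρ g⁻¹ w⟫_ℂ := by
  have := h g v (ρ g⁻¹ w)
  rwa [← Module.End.mul_apply, ← map_mul, mul_inv_cancel, map_one, Module.End.one_apply] at this

theorem aux_norm_s9 {G V : Type*} [Group G] [NormedAddCommGroup V] [InnerProductSpace ℂ V]
    {ρ : Representation ℂ G V} (h : IsUnitaryRep ρ) (g : G) (v : V) :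
    ‖ρ g v‖ = ‖v‖ := by
  have := h g v v
  rw [inner_self_eq_norm_sq_to_K, inner_self_eq_norm_sq_to_K] at this
  have h2 : ‖ρ g v‖ ^ 2 = ‖v‖ ^ 2 := by exact_mod_cast this
  exact (pow_left_inj₀ (norm_nonneg _) (norm_nonneg _) two_ne_zero).1 h2

theorem aux_char {G V : Type*} [Group G] [NormedAddCommGroup V] [InnerProductSpace ℂ V]
    [FiniteDimensional ℂ V]
    {ρ : Representation ℂ G V} (h : IsUnitaryRep ρ) (g : G) :
    starRingEnd ℂ (repChar ρ g) = repChar ρ g⁻¹ := by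
  unfold repChar
  rw [LinearMap.trace_eq_sum_inner _ (stdOrthonormalBasis ℂ V),
    LinearMap.trace_eq_sum_inner _ (stdOrthonormalBasis ℂ V), map_sum]
  refine Finset.sum_congr rfl fun i _ => ?_
  rw [inner_conj_symm, aux_adj h]

theorem aux_charconj {G V : Type*} [Group G] [AddCommGroup V] [Module ℂ V]
    (ρ : Representation ℂ G V) (g h : G) :
    repChar ρ (h * g * h⁻¹) = repChar ρ g := by
  unfold repChar
  rw [map_mul, LinearMap.trace_mul_comm, ← map_mul]
  simp

theorem aux_irr {G V : Type*} [Group G] [AddCommGroup V] [Module ℂ V]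
    {ρ : Representation ℂ G V} (h : IsIrreducibleRep ρ) : ρ.IsIrreducible := by
  obtain ⟨⟨v, hv⟩, h2⟩ := h
  refine { exists_pair_ne := ⟨⊥, ⊤, ?_⟩, eq_bot_or_eq_top := ?_ }
  · intro he
    have : (⊥ : Submodule ℂ V) = ⊤ := congrArg Subrepresentation.toSubmodule he
    have hv' : v ∈ (⊥ : Submodule ℂ V) := this ▸ Submodule.mem_top
    exact hv (by simpa using hv')
  · intro S
    rcases h2 S.toSubmodule (fun g v hv => S.apply_mem_toSubmodule g hv) with h | h
    · left; exact Subrepresentation.toSubmodule_injective h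
    · right; exact Subrepresentation.toSubmodule_injective h

theorem aux_iso_apply {G V : Type*} [Group G] [Fintype G] [AddCommGroup V] [Module ℂ V]
    (d : ℕ) (χ : G → ℂ) (ρ : Representation ℂ G V) (v : V) :
    isoProj d χ ρ v = ((d : ℂ) / (Fintype.card G : ℂ)) • ∑ g : G, starRingEnd ℂ (χ g) • ρ g v := by
  simp [isoProj]

theorem aux_comm {G V X : Type*} [Group G] [Fintype G] [AddCommGroup V] [Module ℂ V]
    [AddCommGroup X] [Module ℂ X] (d : ℕ) (σ : Representation ℂ G X)
    (ρ : Representation ℂ G V) (h : G) (v : V) :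
    isoProj d (repChar σ) ρ (ρ h v) = ρ h (isoProj d (repChar σ) ρ v) := by
  rw [aux_iso_apply, aux_iso_apply, map_smul, map_sum]
  congr 1
  refine Fintype.sum_equiv (MulAut.conj h⁻¹).toEquiv _ _ fun g => ?_
  have e1 : (MulAut.conj h⁻¹).toEquiv g = h⁻¹ * g * h⁻¹⁻¹ := rfl
  rw [e1, aux_charconj, map_smul, ← Module.End.mul_apply, ← map_mul, ← Module.End.mul_apply,
    ← map_mul]
  congr 3
  group

theorem aux_symm {G V X : Type*} [Group G] [Fintype G] [NormedAddCommGroup V]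
    [InnerProductSpace ℂ V] [NormedAddCommGroup X] [InnerProductSpace ℂ X]
    [FiniteDimensional ℂ X] (d : ℕ) {σ : Representation ℂ G X} (hσ : IsUnitaryRep σ)
    {ρ : Representation ℂ G V} (hρ : IsUnitaryRep ρ) (v w : V) :
    ⟪isoProj d (repChar σ) ρ v, w⟫_ℂ = ⟪v, isoProj d (repChar σ) ρ w⟫_ℂ := by
  rw [aux_iso_apply, aux_iso_apply, inner_smul_left, inner_smul_right, sum_inner, inner_sum]
  congr 1
  · simp
  refine Fintype.sum_equiv (Equiv.inv G) _ _ fun g => ?_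
  rw [inner_smul_left, inner_smul_right, aux_adj hρ, Equiv.inv_apply, ← aux_char hσ]

theorem aux_scalar {G U : Type*} [Group G] [AddCommGroup U] [Module ℂ U]
    [FiniteDimensional ℂ U] {τ : Representation ℂ G U} (hτ : IsIrreducibleRep τ)
    (L : U →ₗ[ℂ] U) (hL : ∀ g u, L (τ g u) = τ g (L u)) : ∃ c : ℂ, ∀ u, L u = c • u := by
  obtain ⟨v, hv⟩ := hτ.1
  have : Nontrivial U := ⟨v, 0, hv⟩
  obtain ⟨c, hc⟩ := Module.End.exists_eigenvalue L
  refine ⟨c, fun u => ?_⟩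
  rcases hτ.2 (Module.End.eigenspace L c) (fun g u hu => by
    rw [Module.End.mem_eigenspace_iff] at hu ⊢
    rw [hL, hu, map_smul]) with h | h
  · exact absurd h hc
  · have : u ∈ Module.End.eigenspace L c := h ▸ Submodule.mem_top
    rwa [Module.End.mem_eigenspace_iff] at this

open Classical in
theorem aux_irr_proj {G U X : Type*} [Group G] [Fintype G] [AddCommGroup U] [Module ℂ U]
    [FiniteDimensional ℂ U] [NormedAddCommGroup X] [InnerProductSpace ℂ X]
    [FiniteDimensional ℂ X]
    {τ : Representation ℂ G U} (hτ : IsIrreducibleRep τ) {σ : Representation ℂ G X}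
    (hσ : IsUnitaryRep σ) (hσi : IsIrreducibleRep σ) (u : U) :
    isoProj (Module.finrank ℂ X) (repChar σ) τ u = if RepIso τ σ then u else 0 := by
  obtain ⟨c, hc⟩ := aux_scalar hτ (isoProj (Module.finrank ℂ X) (repChar σ) τ)
    (fun g u => aux_comm _ _ _ _ _)
  have := aux_irr hτ
  have := aux_irr hσi
  have : Invertible (Nat.card G : ℂ) := invertibleOfNonzero (by simp)
  have hor := Representation.char_orthonormal τ σ
  have htr : LinearMap.trace ℂ U (isoProj (Module.finrank ℂ X) (repChar σ) τ)
      = c * Module.finrank ℂ U := by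
    have : isoProj (Module.finrank ℂ X) (repChar σ) τ = c • LinearMap.id := by
      ext u; simp [hc]
    rw [this, map_smul, LinearMap.trace_id, smul_eq_mul]
  have htr2 : LinearMap.trace ℂ U (isoProj (Module.finrank ℂ X) (repChar σ) τ)
      = Module.finrank ℂ X *
        ((Nat.card G : ℂ)⁻¹ * ∑ g : G, τ.character g * σ.character g⁻¹) := by
    unfold isoProj
    rw [map_smul, map_sum, Nat.card_eq_fintype_card, div_eq_mul_inv, smul_eq_mul, mul_assoc]
    congr 2
    refine Finset.sum_congr rfl fun g _ => ?_
    rw [map_smul, aux_char hσ, smul_eq_mul, mul_comm]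
    rfl
  rw [htr, hor] at htr2
  obtain ⟨v, hv⟩ := hτ.1
  have : Nontrivial U := ⟨v, 0, hv⟩
  have hpos : (Module.finrank ℂ U : ℂ) ≠ 0 := by
    exact_mod_cast (Module.finrank_pos (R := ℂ) (M := U)).ne'
  rw [hc]
  have hiff : Nonempty (σ.Equiv τ) ↔ RepIso τ σ := by
    constructor
    · rintro ⟨e⟩
      refine ⟨e.toLinearEquiv.symm, fun g v => ?_⟩
      apply e.toLinearEquiv.injective
      have := LinearMap.congr_fun (e.toIntertwiningMap.isIntertwining' g)
        (e.toLinearEquiv.symm v)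
      have h3 : e.toLinearEquiv (σ g (e.toLinearEquiv.symm v)) =
        τ g (e.toLinearEquiv (e.toLinearEquiv.symm v)) := this
      rw [h3, LinearEquiv.apply_symm_apply, LinearEquiv.apply_symm_apply]
    · rintro ⟨e, he⟩
      refine ⟨Representation.Equiv.mk e.symm fun g => ?_⟩
      ext x
      apply e.injective
      simp [he]
  split_ifs with h
  · rw [if_pos (hiff.2 h)] at htr2
    obtain ⟨e, -⟩ := h
    rw [← e.finrank_eq] at htr2
    have : c = 1 := by
      apply mul_right_cancel₀ hpos
      rw [htr2]; simp
    rw [this, one_smul]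
  · rw [if_neg (fun h' => h (hiff.1 h'))] at htr2
    have : c = 0 := by
      apply mul_right_cancel₀ hpos
      rw [htr2]; simp
    rw [this, zero_smul]


theorem aux_exists_irr {G V : Type*} [Group G] [AddCommGroup V] [Module ℂ V]
    [FiniteDimensional ℂ V] (ρ : Representation ℂ G V) (S : Submodule ℂ V) (hS : S ≠ ⊥)
    (hinv : ∀ g, S ≤ S.comap (ρ g)) :
    ∃ (U : Submodule ℂ V) (hU : ∀ g, U ≤ U.comap (ρ g)), U ≤ S ∧ U ≠ ⊥ ∧
      IsIrreducibleRep (ρ.subrepresentation U hU) := by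
  classical
  let P : ℕ → Prop := fun n => ∃ U : Submodule ℂ V, (∀ g, U ≤ U.comap (ρ g)) ∧ U ≤ S ∧ U ≠ ⊥ ∧
    Module.finrank ℂ U = n
  have hP : ∃ n, P n := ⟨_, S, hinv, le_rfl, hS, rfl⟩
  obtain ⟨U, hU, hUS, hU0, hUn⟩ := Nat.find_spec hP
  refine ⟨U, hU, hUS, hU0, ?_, ?_⟩
  · obtain ⟨x, hx, hx0⟩ := Submodule.exists_mem_ne_zero_of_ne_bot hU0
    exact ⟨⟨x, hx⟩, fun h => hx0 (congrArg Subtype.val h)⟩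
  · intro Y hY
    by_cases hY0 : Y = ⊥
    · exact Or.inl hY0
    right
    have hle : Y.map U.subtype ≤ U := Submodule.map_subtype_le U Y
    have hmin : Nat.find hP ≤ Module.finrank ℂ (Y.map U.subtype) := by
      refine Nat.find_min' hP ⟨Y.map U.subtype, ?_, hle.trans hUS, ?_, rfl⟩
      · rintro g _ ⟨y, hy, rfl⟩
        exact ⟨_, hY g y hy, rfl⟩
      · intro h
        apply hY0
        apply Submodule.map_injective_of_injective U.injective_subtype
        rw [h, Submodule.map_bot]
    rw [← hUn] at hmin
    have := Submodule.eq_of_le_of_finrank_le hle hmin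
    apply Submodule.map_injective_of_injective U.injective_subtype
    rw [this]; simp

theorem aux_sub_iso {G V : Type*} [Group G] [Fintype G] [AddCommGroup V] [Module ℂ V]
    (d : ℕ) (χ : G → ℂ) (ρ : Representation ℂ G V) (U : Submodule ℂ V)
    (hU : ∀ g, U ≤ U.comap (ρ g)) (u : U) :
    isoProj d χ ρ u = (isoProj d χ (ρ.subrepresentation U hU) u : V) := by
  rw [aux_iso_apply, aux_iso_apply]
  simp [Representation.subrepresentation]

theorem aux_eq_zero {G V : Type*} [Group G] [NormedAddCommGroup V] [InnerProductSpace ℂ V]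
    [FiniteDimensional ℂ V] {ρ : Representation ℂ G V} (hρ : IsUnitaryRep ρ)
    (L : V →ₗ[ℂ] V) (hL : ∀ g v, L (ρ g v) = ρ g (L v))
    (h0 : ∀ (U : Submodule ℂ V) (hU : ∀ g, U ≤ U.comap (ρ g)),
      IsIrreducibleRep (ρ.subrepresentation U hU) → ∀ u : U, L u = 0) (v : V) : L v = 0 := by
  by_contra hv
  have hne : (LinearMap.ker L)ᗮ ≠ ⊥ := by
    intro h
    rw [Submodule.orthogonal_eq_bot_iff] at h
    have : v ∈ LinearMap.ker L := h ▸ Submodule.mem_top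
    exact hv this
  obtain ⟨U, hU, hUK, hU0, hUi⟩ := aux_exists_irr ρ _ hne (by
    intro g x hx
    rw [Submodule.mem_comap, Submodule.mem_orthogonal']
    rw [Submodule.mem_orthogonal'] at hx
    intro u hu
    rw [aux_adj hρ]
    apply hx
    rw [LinearMap.mem_ker] at hu ⊢
    rw [hL, hu, map_zero])
  obtain ⟨x, hx, hx0⟩ := Submodule.exists_mem_ne_zero_of_ne_bot hU0
  have h1 : x ∈ LinearMap.ker L := h0 U hU hUi ⟨x, hx⟩
  have h2 := (Submodule.mem_orthogonal' _ _).1 (hUK hx) x h1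
  exact hx0 (inner_self_eq_zero.1 h2)

theorem aux_idem {G V X : Type*} [Group G] [Fintype G] [NormedAddCommGroup V]
    [InnerProductSpace ℂ V] [FiniteDimensional ℂ V] [NormedAddCommGroup X] [InnerProductSpace ℂ X]
    [FiniteDimensional ℂ X] {σ : Representation ℂ G X} (hσ : IsUnitaryRep σ)
    (hσi : IsIrreducibleRep σ)
    {ρ : Representation ℂ G V} (hρ : IsUnitaryRep ρ) (v : V) :
    isoProj (Module.finrank ℂ X) (repChar σ) ρ (isoProj (Module.finrank ℂ X) (repChar σ) ρ v)
      = isoProj (Module.finrank ℂ X) (repChar σ) ρ v := by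
  set I := isoProj (Module.finrank ℂ X) (repChar σ) ρ with hI
  have hc : ∀ g v, I (ρ g v) = ρ g (I v) := fun g v => aux_comm _ _ _ _ _
  have := aux_eq_zero hρ (I ∘ₗ I - I) (fun g v => by simp [hc]) (fun U hU hi u => by
    have h1 : I u = isoProj (Module.finrank ℂ X) (repChar σ) (ρ.subrepresentation U hU) u :=
      aux_sub_iso _ _ _ _ _ _
    rw [aux_irr_proj hi hσ hσi] at h1
    rw [LinearMap.sub_apply, LinearMap.comp_apply]
    split_ifs at h1
    · rw [h1, h1, sub_self]
    · rw [h1]; simp) v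
  exact sub_eq_zero.1 this

theorem aux_complete {G : Type*} [Group G] {J : Type*}
    {W : J → Type*} [∀ j, NormedAddCommGroup (W j)] [∀ j, InnerProductSpace ℂ (W j)]
    [∀ j, FiniteDimensional ℂ (W j)]
    {σ : ∀ j, Representation ℂ G (W j)} (hfam : IsCompleteFamily W σ)
    {U : Type*} [AddCommGroup U] [Module ℂ U] [FiniteDimensional ℂ U]
    {τ : Representation ℂ G U} (hτ : IsIrreducibleRep τ) : ∃ j, RepIso τ (σ j) := by
  let e : U ≃ₗ[ℂ] (Fin (Module.finrank ℂ U) → ℂ) := (Module.finBasis ℂ U).equivFun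
  let τ' : Representation ℂ G (Fin (Module.finrank ℂ U) → ℂ) :=
    { toFun := fun g => e.conj (τ g)
      map_one' := by ext; simp [LinearEquiv.conj_apply]
      map_mul' := fun g h => by rw [map_mul, Module.End.mul_eq_comp, LinearEquiv.conj_comp]; rfl }
  have hτ'e : ∀ g x, τ' g x = e (τ g (e.symm x)) := fun g x => rfl
  have hτ' : IsIrreducibleRep τ' := by
    obtain ⟨⟨v, hv⟩, h2⟩ := hτ
    refine ⟨⟨e v, by simpa using hv⟩, fun Y hY => ?_⟩
    have key := h2 (Y.comap e.toLinearMap) (fun g v hv => by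
      have := hY g (e v) hv
      rw [hτ'e, LinearEquiv.symm_apply_apply] at this
      exact this)
    rcases key with h | h
    · left
      rw [Submodule.eq_bot_iff] at h ⊢
      intro x hx
      have := h (e.symm x) (by simpa using hx)
      simpa using this
    · right
      rw [Submodule.eq_top_iff'] at h ⊢
      intro x
      simpa using h (e.symm x)
  obtain ⟨j, e', he'⟩ := hfam.2.2.2 _ τ' hτ'
  refine ⟨j, e.trans e', fun g v => ?_⟩
  rw [LinearEquiv.trans_apply, LinearEquiv.trans_apply, ← he', hτ'e, LinearEquiv.symm_apply_apply]

theorem aux_sum {G : Type*} [Group G] [Fintype G] {J : Type*} [Fintype J]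
    {W : J → Type*} [∀ j, NormedAddCommGroup (W j)] [∀ j, InnerProductSpace ℂ (W j)]
    [∀ j, FiniteDimensional ℂ (W j)]
    {σ : ∀ j, Representation ℂ G (W j)} (hfam : IsCompleteFamily W σ)
    {V : Type*} [NormedAddCommGroup V] [InnerProductSpace ℂ V] [FiniteDimensional ℂ V]
    {ρ : Representation ℂ G V} (hρ : IsUnitaryRep ρ) (b : V) :
    ∑ j, isoProj (Module.finrank ℂ (W j)) (repChar (σ j)) ρ b = b := by
  classical
  have := aux_eq_zero hρ
    (∑ j, isoProj (Module.finrank ℂ (W j)) (repChar (σ j)) ρ - LinearMap.id)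
    (fun g v => by simp [aux_comm]) (fun U hU hi u => by
      obtain ⟨j, hj⟩ := aux_complete hfam hi
      rw [LinearMap.sub_apply, LinearMap.sum_apply, LinearMap.id_apply, sub_eq_zero]
      rw [Finset.sum_eq_single j]
      · rw [aux_sub_iso _ _ _ U hU, aux_irr_proj hi (hfam.1 j) (hfam.2.1 j), if_pos hj]
      · intro k _ hk
        rw [aux_sub_iso _ _ _ U hU, aux_irr_proj hi (hfam.1 k) (hfam.2.1 k), if_neg]
        · rfl
        · rintro ⟨e, he⟩
          obtain ⟨e', he'⟩ := hj
          refine hfam.2.2.1 j k hk.symm ⟨e'.symm.trans e, fun g v => ?_⟩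
          rw [LinearEquiv.trans_apply, LinearEquiv.trans_apply, ← he]
          congr 1
          apply e'.injective
          rw [he', LinearEquiv.apply_symm_apply, LinearEquiv.apply_symm_apply]
      · simp) b
  rw [LinearMap.sub_apply, LinearMap.sum_apply, sub_eq_zero] at this
  exact this

theorem aux_dim {G V X : Type*} [Group G] [Fintype G] [NormedAddCommGroup V]
    [InnerProductSpace ℂ V] [FiniteDimensional ℂ V] [NormedAddCommGroup X] [InnerProductSpace ℂ X]
    [FiniteDimensional ℂ X] {σ : Representation ℂ G X} (hσ : IsUnitaryRep σ)
    (hσi : IsIrreducibleRep σ)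
    (ρ : Representation ℂ G V) (S : Submodule ℂ V) (hS : S ≠ ⊥)
    (hinv : ∀ g, S ≤ S.comap (ρ g))
    (hI : ∀ v ∈ S, isoProj (Module.finrank ℂ X) (repChar σ) ρ v = v) :
    Module.finrank ℂ X ≤ Module.finrank ℂ S := by
  classical
  obtain ⟨U, hU, hUS, hU0, hUi⟩ := aux_exists_irr ρ S hS hinv
  obtain ⟨x, hx, hx0⟩ := Submodule.exists_mem_ne_zero_of_ne_bot hU0
  have h1 := hI x (hUS hx)
  rw [aux_sub_iso _ _ ρ U hU ⟨x, hx⟩, aux_irr_proj hUi hσ hσi] at h1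
  split_ifs at h1 with h
  · obtain ⟨e, -⟩ := h
    rw [← e.finrank_eq]
    exact Submodule.finrank_mono hUS
  · exact absurd h1.symm hx0

/-- averaged rank one operator -/
def auxT {G V : Type*} [Group G] [Fintype G] [NormedAddCommGroup V]
    [InnerProductSpace ℂ V] (ρ : Representation ℂ G V) (v : V) : V →ₗ[ℂ] V :=
  ((Fintype.card G : ℂ)⁻¹) • ∑ g : G, (innerₛₗ ℂ (ρ g v)).smulRight (ρ g v)

theorem auxT_apply {G V : Type*} [Group G] [Fintype G] [NormedAddCommGroup V]
    [InnerProductSpace ℂ V] (ρ : Representation ℂ G V) (v w : V) :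
    auxT ρ v w = ((Fintype.card G : ℂ)⁻¹) • ∑ g : G, ⟪ρ g v, w⟫_ℂ • ρ g v := by
  simp [auxT]

theorem auxT_symm {G V : Type*} [Group G] [Fintype G] [NormedAddCommGroup V]
    [InnerProductSpace ℂ V] (ρ : Representation ℂ G V) (v : V) :
    (auxT ρ v).IsSymmetric := by
  intro x y
  rw [auxT_apply, auxT_apply, inner_smul_left, inner_smul_right, sum_inner, inner_sum]
  congr 1
  · simp
  refine Finset.sum_congr rfl fun g _ => ?_
  rw [inner_smul_left, inner_smul_right, inner_conj_symm, mul_comm]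

theorem auxT_inner {G V : Type*} [Group G] [Fintype G] [NormedAddCommGroup V]
    [InnerProductSpace ℂ V] (ρ : Representation ℂ G V) (v x : V) :
    ⟪x, auxT ρ v x⟫_ℂ = (((Fintype.card G : ℝ)⁻¹ * ∑ g : G, ‖⟪x, ρ g v⟫_ℂ‖ ^ 2 : ℝ) : ℂ) := by
  rw [auxT_apply, inner_smul_right, inner_sum]
  push_cast
  congr 1
  refine Finset.sum_congr rfl fun g _ => ?_
  rw [inner_smul_right, ← inner_conj_symm (ρ g v) x, mul_comm, Complex.mul_conj,
    Complex.normSq_eq_norm_sq]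
  simp

theorem auxT_comm {G V : Type*} [Group G] [Fintype G] [NormedAddCommGroup V]
    [InnerProductSpace ℂ V] {ρ : Representation ℂ G V} (hρ : IsUnitaryRep ρ) (v : V) (h : G)
    (x : V) : auxT ρ v (ρ h x) = ρ h (auxT ρ v x) := by
  rw [auxT_apply, auxT_apply, map_smul, map_sum]
  congr 1
  refine Fintype.sum_equiv (Equiv.mulLeft h⁻¹) _ _ fun g => ?_
  rw [map_smul, Equiv.coe_mulLeft, ← hρ h _ x]
  simp only [← Module.End.mul_apply, ← map_mul]
  simp

theorem aux_key {G V X : Type*} [Group G] [Fintype G] [NormedAddCommGroup V]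
    [InnerProductSpace ℂ V] [FiniteDimensional ℂ V] [NormedAddCommGroup X] [InnerProductSpace ℂ X]
    [FiniteDimensional ℂ X] {σ : Representation ℂ G X} (hσ : IsUnitaryRep σ)
    (hσi : IsIrreducibleRep σ)
    {ρ : Representation ℂ G V} (hρ : IsUnitaryRep ρ) (v : V)
    (hv : isoProj (Module.finrank ℂ X) (repChar σ) ρ v = v) :
    (Fintype.card G : ℝ)⁻¹ * ∑ g : G, ‖⟪v, ρ g v⟫_ℂ‖ ^ 2 ≤ ‖v‖ ^ 4 / Module.finrank ℂ X := by
  obtain ⟨x0, hx0⟩ := hσi.1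
  have : Nontrivial X := ⟨x0, 0, hx0⟩
  have hd : (0 : ℝ) < Module.finrank ℂ X := by
    exact_mod_cast Module.finrank_pos (R := ℂ) (M := X)
  have hG : (0 : ℝ) < Fintype.card G := by exact_mod_cast Fintype.card_pos
  have hT := auxT_symm ρ v
  have hn : Module.finrank ℂ V = Module.finrank ℂ V := rfl
  set B := hT.eigenvectorBasis hn with hB
  have hev : ∀ i, hT.eigenvalues hn i ≤ ‖v‖ ^ 2 / Module.finrank ℂ X := by
    intro i
    by_cases h0 : hT.eigenvalues hn i ≤ 0
    · exact h0.trans (by positivity)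
    push Not at h0
    set l := hT.eigenvalues hn i with hl
    set E := Module.End.eigenspace (auxT ρ v) (l : ℂ) with hE
    have hEne : E ≠ ⊥ := hT.hasEigenvalue_eigenvalues hn i
    have hinv : ∀ g, E ≤ E.comap (ρ g) := by
      intro g x hx
      rw [Submodule.mem_comap, Module.End.mem_eigenspace_iff]
      rw [Module.End.mem_eigenspace_iff] at hx
      rw [auxT_comm hρ, hx, map_smul]
    have hlc : (l : ℂ) ≠ 0 := by exact_mod_cast h0.ne'
    have hdim := aux_dim hσ hσi ρ E hEne hinv (by
      intro x hx
      rw [Module.End.mem_eigenspace_iff] at hx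
      apply smul_right_injective V hlc
      simp only
      rw [← map_smul, ← hx, auxT_apply]
      simp [aux_comm, hv])
    let e := stdOrthonormalBasis ℂ E
    have hbes : ∀ g, ∑ k, ‖⟪(e k : V), ρ g v⟫_ℂ‖ ^ 2 ≤ ‖v‖ ^ 2 := by
      intro g
      rw [← aux_norm_s9 hρ g v]
      have ho : Orthonormal ℂ (fun k => (e k : V)) :=
        e.orthonormal.comp_linearIsometry E.subtypeₗᵢ
      exact ho.sum_inner_products_le (ρ g v) (s := Finset.univ)
    have hlk : ∀ k, (Fintype.card G : ℝ)⁻¹ * ∑ g : G, ‖⟪(e k : V), ρ g v⟫_ℂ‖ ^ 2 = l := by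
      intro k
      have h1 := auxT_inner ρ v (e k : V)
      have hek := (e k).2
      rw [Module.End.mem_eigenspace_iff] at hek
      rw [hek, inner_smul_right, inner_self_eq_norm_sq_to_K] at h1
      have h2 : ‖(e k : V)‖ = 1 := e.orthonormal.1 k
      rw [h2] at h1
      have h3 : ((l * 1 ^ 2 : ℝ) : ℂ) = _ := (by push_cast; rfl : _ = _).trans h1
      have h4 := Complex.ofReal_injective h3
      rw [← h4]; ring
    have hfin : (Module.finrank ℂ E : ℝ) * l ≤ ‖v‖ ^ 2 := by
      calc (Module.finrank ℂ E : ℝ) * l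
          = ∑ k, (Fintype.card G : ℝ)⁻¹ * ∑ g : G, ‖⟪(e k : V), ρ g v⟫_ℂ‖ ^ 2 := by
            rw [Finset.sum_congr rfl fun k _ => hlk k]; simp
        _ = (Fintype.card G : ℝ)⁻¹ * ∑ g : G, ∑ k, ‖⟪(e k : V), ρ g v⟫_ℂ‖ ^ 2 := by
            rw [← Finset.mul_sum, Finset.sum_comm]
        _ ≤ (Fintype.card G : ℝ)⁻¹ * ∑ g : G, ‖v‖ ^ 2 := by
            gcongr with g _
            exact hbes g
        _ = ‖v‖ ^ 2 := by
            simp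
    rw [le_div_iff₀ hd]
    have : (Module.finrank ℂ X : ℝ) ≤ Module.finrank ℂ E := by exact_mod_cast hdim
    nlinarith
  have h1 := auxT_inner ρ v v
  have h2 : ⟪v, auxT ρ v v⟫_ℂ = ((∑ i, hT.eigenvalues hn i * ‖⟪B i, v⟫_ℂ‖ ^ 2 : ℝ) : ℂ) := by
    rw [← B.sum_inner_mul_inner]
    push_cast
    refine Finset.sum_congr rfl fun i _ => ?_
    rw [← hT, hT.apply_eigenvectorBasis, inner_smul_left, ← inner_conj_symm v]
    rw [mul_left_comm, ← hB, ← Complex.normSq_eq_conj_mul_self, Complex.normSq_eq_norm_sq]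
    simp
  rw [h1] at h2
  have h3 := Complex.ofReal_injective h2
  rw [h3]
  calc ∑ i, hT.eigenvalues hn i * ‖⟪B i, v⟫_ℂ‖ ^ 2
      ≤ ∑ i, ‖v‖ ^ 2 / Module.finrank ℂ X * ‖⟪B i, v⟫_ℂ‖ ^ 2 := by
        gcongr with i _
        exact hev i
    _ = ‖v‖ ^ 4 / Module.finrank ℂ X := by
        rw [← Finset.mul_sum, B.sum_sq_norm_inner_right]
        ring

end Aux

/-- For any unitary representation `ρ` of a finite group `G` and any `b ∈ V`,
`(1/|G|) Σ_g |⟪b, ρ g b⟫|² ≤ Σ_j ‖I_j b‖⁴ / d_j`. -/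
theorem stmt9 {G : Type*} [Group G] [Fintype G]
    {J : Type*} [Fintype J]
    (W : J → Type*) [∀ j, NormedAddCommGroup (W j)] [∀ j, InnerProductSpace ℂ (W j)]
    [∀ j, FiniteDimensional ℂ (W j)]
    (σ : ∀ j, Representation ℂ G (W j)) (hfam : IsCompleteFamily W σ)
    {V : Type*} [NormedAddCommGroup V] [InnerProductSpace ℂ V] [FiniteDimensional ℂ V]
    (ρ : Representation ℂ G V) (hρu : IsUnitaryRep ρ)
    (b : V) :
    (1 / (Fintype.card G : ℝ)) * ∑ g : G, ‖⟪b, ρ g b⟫_ℂ‖ ^ 2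
      ≤ ∑ j, ‖isoProj (Module.finrank ℂ (W j)) (repChar (σ j)) ρ b‖ ^ 4
          / (Module.finrank ℂ (W j) : ℝ) := by
  rw [one_div]
  have hsum := aux_sum hfam hρu b
  set I : J → V →ₗ[ℂ] V := fun j => isoProj (Module.finrank ℂ (W j)) (repChar (σ j)) ρ with hI
  have hidem : ∀ j v, I j (I j v) = I j v := fun j v => aux_idem (hfam.1 j) (hfam.2.1 j) hρu v
  have hsym : ∀ j v w, ⟪I j v, w⟫_ℂ = ⟪v, I j w⟫_ℂ := fun j v w => aux_symm _ (hfam.1 j) hρu v w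
  have hcomm : ∀ j g v, I j (ρ g v) = ρ g (I j v) := fun j g v => aux_comm _ _ _ _ _
  have hTI : ∀ j x, auxT ρ b (I j x) = I j (auxT ρ b x) := by
    intro j x
    simp only [hI]
    rw [aux_iso_apply, aux_iso_apply, map_smul, map_sum]
    congr 1
    refine Finset.sum_congr rfl fun g _ => ?_
    rw [map_smul, auxT_comm hρu]
  have hLHS : (Fintype.card G : ℝ)⁻¹ * ∑ g : G, ‖⟪b, ρ g b⟫_ℂ‖ ^ 2
      = ∑ j, (Fintype.card G : ℝ)⁻¹ * ∑ g : G, ‖⟪I j b, ρ g (I j b)⟫_ℂ‖ ^ 2 := by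
    apply Complex.ofReal_injective
    rw [← auxT_inner, Complex.ofReal_sum]
    have hb : auxT ρ b b = ∑ j, auxT ρ b (I j b) := by
      rw [← map_sum]
      exact congrArg _ hsum.symm
    rw [hb, inner_sum]
    refine Finset.sum_congr rfl fun j _ => ?_
    rw [← hidem j b, hTI, ← hsym, hidem, auxT_inner]
    congr 2
    refine Finset.sum_congr rfl fun g _ => ?_
    rw [← hcomm, ← hsym, hidem]
  rw [hLHS]
  exact Finset.sum_le_sum fun j _ => aux_key (hfam.1 j) (hfam.2.1 j) hρu (I j b) (hidem j b)
end
end
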